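/- arXiv:2305.14227 — 4 statements merged into one kernel-verified Lean document; each statement's English description precedes it below -/
import Mathlib

section
/- Let K be a field and p : ℕ → K[X] a sequence of polynomials with deg(p n) = n for every n. Let L : K[X] → K[X] be a linear map with L(p 0) = 0 and L(p (n+1)) = p n for all n, and let l₀ : K[X] → K be a linear functional with l₀(p n) = δ_{0n}. Then for every polynomial f one has the resolution of the identity f = Σ_{k=0}^{deg f} l₀(L^k f) · p k. -/
open Polynomial

/-- Resolution of the identity: if `p n` has degree exactly `n`, `L (p 0) = 0`,
`L (p (n+1)) = p n` and `l₀ (p n) = δ_{0n}`, then every polynomial `f` satisfies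
`f = Σ_{k=0}^{deg f} l₀(L^k f) · p k`. -/
theorem stmt_6 {K : Type*} [Field K]
    (p : ℕ → K[X]) (hdeg : ∀ n : ℕ, (p n).degree = n)
    (L : Module.End K K[X])
    (hL0 : L (p 0) = 0) (hL : ∀ n : ℕ, L (p (n + 1)) = p n)
    (l₀ : K[X] →ₗ[K] K)
    (hl₀ : ∀ n : ℕ, l₀ (p n) = if n = 0 then 1 else 0) :
    ∀ f : K[X],
      f = ∑ k ∈ Finset.range (f.natDegree + 1), l₀ ((L ^ k) f) • p k := by
  have key : ∀ k n : ℕ, l₀ ((L ^ k) (p n)) = if n = k then 1 else 0 := by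
    intro k
    induction k with
    | zero => intro n; simpa using hl₀ n
    | succ k ih =>
      intro n
      rw [pow_succ, Module.End.mul_apply]
      cases n with
      | zero => simp [hL0]
      | succ n => rw [hL, ih]; simp
  have span : ∀ N : ℕ, ∀ f : K[X], f.degree < N →
      ∃ a : ℕ → K, f = ∑ k ∈ Finset.range N, a k • p k := by
    intro N
    induction N with
    | zero =>
      intro f hf
      refine ⟨0, ?_⟩
      simpa [Polynomial.degree_lt_iff_coeff_zero, Polynomial.ext_iff] using hf
    | succ N ih =>
      intro f hf
      have hc : (p N).coeff N ≠ 0 := Polynomial.coeff_ne_zero_of_eq_degree (hdeg N)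
      obtain ⟨a, ha⟩ := ih (f - (f.coeff N / (p N).coeff N) • p N) (by
        rw [Polynomial.degree_lt_iff_coeff_zero] at hf ⊢
        intro m hm
        rcases Nat.eq_or_lt_of_le hm with h | h
        · subst h
          simp [hc]
        · have h2 : (p N).coeff m = 0 :=
            Polynomial.coeff_eq_zero_of_degree_lt (by rw [hdeg]; exact_mod_cast h)
          simp [hf m h, h2])
      refine ⟨fun k => if k = N then f.coeff N / (p N).coeff N else a k, ?_⟩
      rw [Finset.sum_range_succ]
      beta_reduce
      rw [if_pos rfl, ← sub_eq_iff_eq_add, ha]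
      refine Finset.sum_congr rfl fun k hk => ?_
      rw [if_neg (Finset.mem_range.1 hk).ne]
  intro f
  obtain ⟨a, ha⟩ := span (f.natDegree + 1) f
    (lt_of_le_of_lt Polynomial.degree_le_natDegree (by exact_mod_cast Nat.lt_succ_self _))
  conv_lhs => rw [ha]
  refine Finset.sum_congr rfl fun k hk => ?_
  have h : l₀ ((L ^ k) f) = a k := by
    have h1 := congrArg (fun g => l₀ ((L ^ k) g)) ha
    simp only [map_sum, map_smul, key, smul_eq_mul, mul_ite, mul_one, mul_zero,
      Finset.sum_ite_eq', if_pos hk] at h1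
    exact h1
  rw [h]
end

section
/- (Binomial type) Let K be a field of characteristic zero and p : ℕ → K[X] with deg(p n) = n for all n. Let L : K[X] → K[X] be a linear map satisfying: (i) L(p 0) = 0 and L(p (n+1)) = p n for all n; (ii) L commutes with every translation, i.e. L(f(X + y)) = (L f)(X + y) for all f ∈ K[X] and y ∈ K; (iii) (p n)(0) = δ_{0n}. Then the binomial identity holds: p n(X + y) = Σ_{k=0}^n (p_{n−k})(y) · p k(X) for every n ∈ ℕ and y ∈ K. -/
open Polynomial

/-- Binomial type: if `p n` has degree exactly `n`, the delta operator `L`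
satisfies `L (p 0) = 0`, `L (p (n+1)) = p n`, commutes with all translations
`f(X) ↦ f(X + y)`, and `(p n)(0) = δ_{0n}`, then the binomial identity
`p_n(X + y) = Σ_{k=0}^n p_{n−k}(y) · p_k(X)` holds. -/
theorem stmt_7 {K : Type*} [Field K] [CharZero K]
    (p : ℕ → K[X]) (hdeg : ∀ n : ℕ, (p n).degree = n)
    (L : Module.End K K[X])
    (hL0 : L (p 0) = 0) (hL : ∀ n : ℕ, L (p (n + 1)) = p n)
    (hcomm : ∀ (f : K[X]) (y : K),
      L (f.comp (X + C y)) = (L f).comp (X + C y))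
    (heval : ∀ n : ℕ, (p n).eval 0 = if n = 0 then 1 else 0) :
    ∀ (n : ℕ) (y : K),
      (p n).comp (X + C y)
        = ∑ k ∈ Finset.range (n + 1), ((p (n - k)).eval y) • p k := by
  have hp0 : p 0 = 1 := by
    have h := eq_C_of_degree_le_zero (p := p 0) (by simp [hdeg])
    have h2 := heval 0
    rw [← coeff_zero_eq_eval_zero] at h2
    rw [h, h2]; simp
  let S : Polynomial.Sequence K := ⟨p, hdeg⟩
  have hS : ∀ i, IsUnit (S i).leadingCoeff := fun i =>
    isUnit_iff_ne_zero.2 (leadingCoeff_ne_zero.2 (S.ne_zero i))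
  let b := S.basis hS
  have hb : ∀ i, b i = p i := fun i => by simp [b]; rfl
  let M : K[X] →ₗ[K] K[X] := b.constr K (fun n => p (n + 1))
  have hM : ∀ n, M (p n) = p (n + 1) := fun n => by
    rw [← hb n]; exact b.constr_basis K _ n
  have key : M ∘ₗ L = LinearMap.id - (Algebra.linearMap K K[X]) ∘ₗ (leval (0 : K)) := by
    refine b.ext fun i => ?_
    rw [hb]
    cases i with
    | zero => simp [hL0, hp0, leval] at *; simp [hL0]
    | succ n => simp [hL, hM, heval, leval]
  have ker : ∀ f : K[X], L f = 0 → f.eval 0 = 0 → f = 0 := by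
    intro f h1 h2
    have := LinearMap.congr_fun key f
    simp [h1, h2, leval] at this
    exact this.symm
  intro n y
  induction n with
  | zero => simp [hp0]
  | succ n ih =>
    rw [← sub_eq_zero]
    apply ker
    · rw [map_sub, hcomm, hL, ih, map_sum, Finset.sum_range_succ' _ (n + 1)]
      simp [hL, hL0]
    · rw [eval_sub, eval_finset_sum, Finset.sum_range_succ' _ (n + 1)]
      simp [heval, eval_comp]
end

section
/- Let K be a field of characteristic zero and p : ℕ → K[X] with deg(p n) = n for all n. Let L : K[X] → K[X] be a linear map satisfying: (i) L(p 0) = 0 and L(p (n+1)) = p n for all n; (ii) L commutes with every translation, i.e. L(f(X + y)) = (L f)(X + y) for all f ∈ K[X] and y ∈ K; (iii) (p n)(0) = δ_{0n}. Then every translation can be expressed through powers of the delta operator L: for every f ∈ K[X] and y ∈ K, f(X + y) = Σ_{k=0}^{deg f} (p k)(y) · (L^k f). -/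
open Polynomial

/-- Translations expressed through powers of the delta operator: under the
binomial-type hypotheses, every translation satisfies
`f(X + y) = Σ_{k=0}^{deg f} p_k(y) · (L^k f)`. -/
theorem stmt_8 {K : Type*} [Field K] [CharZero K]
    (p : ℕ → K[X]) (hdeg : ∀ n : ℕ, (p n).degree = n)
    (L : Module.End K K[X])
    (hL0 : L (p 0) = 0) (hL : ∀ n : ℕ, L (p (n + 1)) = p n)
    (hcomm : ∀ (f : K[X]) (y : K),
      L (f.comp (X + C y)) = (L f).comp (X + C y))
    (heval : ∀ n : ℕ, (p n).eval 0 = if n = 0 then 1 else 0) :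
    ∀ (f : K[X]) (y : K),
      f.comp (X + C y)
        = ∑ k ∈ Finset.range (f.natDegree + 1), ((p k).eval y) • ((L ^ k) f) := by
  have h1 : ∀ k n : ℕ, ((L ^ k) (p n)).eval 0 = if k = n then 1 else 0 := by
    intro k
    induction k with
    | zero => intro n; simp [heval, eq_comm]
    | succ k ih =>
      intro n
      rw [pow_succ, Module.End.mul_apply]
      cases n with
      | zero => simp [hL0]
      | succ n => simp [hL, ih]
  have h2 : ∀ N : ℕ, ∀ g : K[X], g.degree < N → ∀ M, N ≤ M →
      g = ∑ k ∈ Finset.range M, (((L ^ k) g).eval 0) • p k := by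
    intro N
    induction N with
    | zero =>
      intro g hg M _
      have : g = 0 := by simpa using hg
      simp [this]
    | succ N ih =>
      intro g hg M hM
      have hlc : (p N).coeff N ≠ 0 := coeff_ne_zero_of_eq_degree (hdeg N)
      set c := g.coeff N / (p N).coeff N with hc
      have hh : (g - c • p N).degree < N := by
        rw [degree_lt_iff_coeff_zero]
        intro m hm
        rcases hm.eq_or_lt with rfl | hm
        · simp [hc, hlc]
        · have e1 : g.coeff m = 0 := (degree_lt_iff_coeff_zero g (N+1)).1 hg m hm
          have e2 : (p N).coeff m = 0 := coeff_eq_zero_of_degree_lt (by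
            rw [hdeg]; exact_mod_cast hm)
          simp [e1, e2]
      have e := ih _ hh M (by omega)
      have e3 : p N = ∑ k ∈ Finset.range M, (((L ^ k) (p N)).eval 0) • p k := by
        simp only [h1, ite_smul, one_smul, zero_smul]
        rw [Finset.sum_ite_eq', if_pos (Finset.mem_range.2 (by omega))]
      simp only [map_sub, map_smul, eval_sub, eval_smul, sub_smul, Finset.sum_sub_distrib,
        smul_assoc, ← Finset.smul_sum] at e
      rw [← e3] at e
      exact sub_left_injective e
  have h3 : ∀ (k : ℕ) (f : K[X]) (y : K),
      (L ^ k) (f.comp (X + C y)) = ((L ^ k) f).comp (X + C y) := by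
    intro k
    induction k with
    | zero => intro f y; simp
    | succ k ih =>
      intro f y
      rw [pow_succ, Module.End.mul_apply, hcomm, ih, Module.End.mul_apply]
  intro f y
  apply Polynomial.funext
  intro x
  have hd : (f.comp (X + C x)).degree < ((f.natDegree + 1 : ℕ) : WithBot ℕ) := by
    refine degree_le_natDegree.trans_lt ?_
    rw [natDegree_comp, natDegree_X_add_C, mul_one]
    exact_mod_cast Nat.lt_succ_self _
  have e := congrArg (eval y) (h2 _ _ hd _ le_rfl)
  simp only [h3, eval_comp, eval_finset_sum, eval_smul, eval_add, eval_X, eval_C, zero_add,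
    smul_eq_mul] at e ⊢
  rw [add_comm x y, e]
  exact Finset.sum_congr rfl fun k _ => mul_comm _ _
end

section
/- Any translation-invariant linear functional on real polynomials vanishes: if m : ℝ[X] → ℝ is a linear map such that m(f(X + u)) = m(f) for every polynomial f ∈ ℝ[X] and every u ∈ ℝ, then m = 0. -/
open Polynomial

/-- Any translation-invariant linear functional on real polynomials vanishes. -/
theorem stmt_9 (m : ℝ[X] →ₗ[ℝ] ℝ)
    (h : ∀ (f : ℝ[X]) (u : ℝ), m (f.comp (X + C u)) = m f) :
    m = 0 := by
  have key : ∀ n : ℕ, m (X ^ n) = 0 := by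
    intro n
    have hb := congrArg (Polynomial.map (algebraMap ℚ ℝ))
      (Polynomial.bernoulli_comp_one_add_X (n + 1))
    have h1 := h ((Polynomial.bernoulli (n + 1)).map (algebraMap ℚ ℝ)) 1
    rw [Polynomial.map_comp, Polynomial.map_add, Polynomial.map_add, Polynomial.map_one,
      Polynomial.map_X, nsmul_eq_mul, Polynomial.map_mul, Polynomial.map_natCast,
      Polynomial.map_pow, Polynomial.map_X, ← nsmul_eq_mul, Nat.add_sub_cancel] at hb
    rw [Polynomial.C_1, add_comm X (1 : ℝ[X]), hb, map_add, map_nsmul, add_eq_left,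
      nsmul_eq_mul] at h1
    exact (mul_eq_zero.mp h1).resolve_left (by positivity)
  ext n
  simpa [Polynomial.monomial_one_right_eq_X_pow] using key n
end
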